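/- There is an absolute constant C such that for every M ≥ 0, every Lipschitz function A : ℝ → ℝ with Lipschitz constant M, and every dyadic interval J ⊆ ℝ, Σ_{I dyadic, I ⊆ J} β(I)² |I| ≤ C · M² · |J|, where β(I) := inf_{a,b ∈ ℝ} sup_{x ∈ 3I} |A(x) − (a + b x)| / |I|. -/

import Mathlib

open MeasureTheory

/-- The dyadic interval `[2^j m, 2^j (m+1))`. -/
noncomputable def dyadicI (j m : ℤ) : Set ℝ :=
  Set.Ico ((2 : ℝ) ^ j * m) ((2 : ℝ) ^ j * (m + 1))

/-- The `n`-th dilated Jones beta number of `A : ℝ → ℝ` on the dyadic interval `[2^j m, 2^j(m+1))`: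
the infimum over affine functions `a + b x` of the supremum of `|A x - (a + b x)|` over the
interval with the same center and `3n` times the length, normalized by the length `2^j`. -/
noncomputable def jonesBeta (n : ℕ) (A : ℝ → ℝ) (j m : ℤ) : ℝ :=
  ⨅ ab : ℝ × ℝ,
    (⨆ x ∈ Set.Icc ((2 : ℝ) ^ j * ((m : ℝ) + 1 / 2) - 3 * n * (2 : ℝ) ^ j / 2)
        ((2 : ℝ) ^ j * ((m : ℝ) + 1 / 2) + 3 * n * (2 : ℝ) ^ j / 2),
      |A x - (ab.1 + ab.2 * x)|) / (2 : ℝ) ^ j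

/-- The chord of `A` over `[a, a + L]`, evaluated at `x`. -/
noncomputable def chord (A : ℝ → ℝ) (a L x : ℝ) : ℝ :=
  A a + (A (a + L) - A a) / L * (x - a)

/-- The maximal deviation of `A` from its chord over `[a, a + L]`. -/
noncomputable def chordDev (A : ℝ → ℝ) (a L : ℝ) : ℝ :=
  ⨆ x : Set.Icc a (a + L), |A x - chord A a L x|

/-- The energy `slope² * length` of the chord of `A` over `[a, a + L]`. -/
noncomputable def chordEnergy (A : ℝ → ℝ) (a L : ℝ) : ℝ :=
  (A (a + L) - A a) ^ 2 / L

lemma chordDev_nonneg (A : ℝ → ℝ) (a L : ℝ) : 0 ≤ chordDev A a L :=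
  Real.iSup_nonneg fun _ => abs_nonneg _

section Lipschitz

variable {A : ℝ → ℝ} {M : ℝ}

lemma abs_sub_chord_le (hA : ∀ x y, |A x - A y| ≤ M * |x - y|) (hM : 0 ≤ M)
    {a L x : ℝ} (hL : 0 < L) (hx : x ∈ Set.Icc a (a + L)) :
    |A x - chord A a L x| ≤ 2 * M * L := by
  obtain ⟨h1, h2⟩ := hx
  have hx' : |x - a| ≤ L := by rw [abs_le]; constructor <;> linarith
  have e1 : |A x - A a| ≤ M * L := (hA x a).trans (by gcongr)
  have e2 : |(A (a + L) - A a) / L * (x - a)| ≤ M * L := by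
    rw [abs_mul, abs_div, abs_of_pos hL]
    have := hA (a + L) a
    rw [add_sub_cancel_left, abs_of_pos hL] at this
    have h3 : |A (a + L) - A a| / L ≤ M := by rwa [div_le_iff₀ hL]
    gcongr
  have : A x - chord A a L x = (A x - A a) - (A (a + L) - A a) / L * (x - a) := by
    unfold chord; ring
  rw [this]
  exact (abs_sub _ _).trans (by linarith)

lemma chordDev_le (hA : ∀ x y, |A x - A y| ≤ M * |x - y|) (hM : 0 ≤ M)
    {a L : ℝ} (hL : 0 < L) : chordDev A a L ≤ 2 * M * L :=
  Real.iSup_le (fun x => abs_sub_chord_le hA hM hL x.2) (by positivity)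

lemma abs_sub_chord_le_chordDev (hA : ∀ x y, |A x - A y| ≤ M * |x - y|) (hM : 0 ≤ M)
    {a L x : ℝ} (hL : 0 < L) (hx : x ∈ Set.Icc a (a + L)) :
    |A x - chord A a L x| ≤ chordDev A a L :=
  le_ciSup (f := fun x : Set.Icc a (a + L) => |A x - chord A a L x|)
    ⟨2 * M * L, by rintro _ ⟨y, rfl⟩; exact abs_sub_chord_le hA hM hL y.2⟩ ⟨x, hx⟩

lemma chordEnergy_le (hA : ∀ x y, |A x - A y| ≤ M * |x - y|) {a L : ℝ} (hL : 0 < L) :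
    chordEnergy A a L ≤ M ^ 2 * L := by
  have := hA (a + L) a
  rw [add_sub_cancel_left, abs_of_pos hL] at this
  unfold chordEnergy
  rw [div_le_iff₀ hL, ← sq_abs]
  calc |A (a + L) - A a| ^ 2 ≤ (M * L) ^ 2 := by gcongr
    _ = _ := by ring

/-- Bisecting an interval changes the deviation by at most the deviation at the midpoint. -/
lemma chordDev_le_bisect (hA : ∀ x y, |A x - A y| ≤ M * |x - y|) (hM : 0 ≤ M)
    {a L : ℝ} (hL : 0 < L) :
    chordDev A a L ≤ |A (a + L / 2) - (A a + A (a + L)) / 2| +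
      max (chordDev A a (L / 2)) (chordDev A (a + L / 2) (L / 2)) := by
  have hend : a + L / 2 + L / 2 = a + L := by ring
  refine Real.iSup_le (fun ⟨x, h1, h2⟩ => ?_)
    (add_nonneg (abs_nonneg _) (le_max_of_le_left (chordDev_nonneg _ _ _)))
  dsimp only
  set D := A (a + L / 2) - (A a + A (a + L)) / 2 with hD
  rcases le_total x (a + L / 2) with h | h
  · have key := abs_sub_chord_le_chordDev hA hM (half_pos hL) (a := a) ⟨h1, h⟩
    have e : A x - chord A a L x = D * (2 * (x - a) / L) + (A x - chord A a (L / 2) x) := by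
      simp only [chord, hD]; field_simp; ring
    have ht : |2 * (x - a) / L| ≤ 1 := by
      rw [abs_of_nonneg (div_nonneg (by linarith) hL.le), div_le_one hL]; linarith
    rw [e]
    refine (abs_add_le _ _).trans (add_le_add ?_ (key.trans (le_max_left _ _)))
    rw [abs_mul]
    exact mul_le_of_le_one_right (abs_nonneg _) ht
  · have key := abs_sub_chord_le_chordDev hA hM (half_pos hL) (a := a + L / 2)
      ⟨h, by rwa [hend]⟩
    have e : A x - chord A a L x =
        D * (2 * (a + L - x) / L) + (A x - chord A (a + L / 2) (L / 2) x) := by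
      simp only [chord, hD, hend]; field_simp; ring
    have ht : |2 * (a + L - x) / L| ≤ 1 := by
      rw [abs_of_nonneg (div_nonneg (by linarith) hL.le), div_le_one hL]; linarith
    rw [e]
    refine (abs_add_le _ _).trans (add_le_add ?_ (key.trans (le_max_right _ _)))
    rw [abs_mul]
    exact mul_le_of_le_one_right (abs_nonneg _) ht

lemma chordDev_sq_div_le_bisect (hA : ∀ x y, |A x - A y| ≤ M * |x - y|) (hM : 0 ≤ M)
    {a L : ℝ} (hL : 0 < L) :
    chordDev A a L ^ 2 / L ≤
      chordEnergy A a (L / 2) + chordEnergy A (a + L / 2) (L / 2) - chordEnergy A a L +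
      2 / 3 * (chordDev A a (L / 2) ^ 2 / (L / 2) +
        chordDev A (a + L / 2) (L / 2) ^ 2 / (L / 2)) := by
  have h := chordDev_le_bisect hA hM (a := a) hL
  have h0 := chordDev_nonneg A a L
  have hend : a + L / 2 + L / 2 = a + L := by ring
  set s := chordDev A a L
  set s₁ := chordDev A a (L / 2)
  set s₂ := chordDev A (a + L / 2) (L / 2)
  set D := A (a + L / 2) - (A a + A (a + L)) / 2 with hD
  have hmax : max s₁ s₂ ^ 2 ≤ s₁ ^ 2 + s₂ ^ 2 := by
    rcases max_choice s₁ s₂ with e | e <;> rw [e] <;> nlinarith [sq_nonneg s₁, sq_nonneg s₂]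
  have hs : s ^ 2 ≤ 4 * D ^ 2 + 4 / 3 * (s₁ ^ 2 + s₂ ^ 2) := by
    calc s ^ 2 ≤ (|D| + max s₁ s₂) ^ 2 := by gcongr
      _ ≤ 4 * |D| ^ 2 + 4 / 3 * max s₁ s₂ ^ 2 := by
        nlinarith [sq_nonneg (3 * |D| - max s₁ s₂)]
      _ ≤ _ := by rw [sq_abs]; linarith
  calc s ^ 2 / L ≤ (4 * D ^ 2 + 4 / 3 * (s₁ ^ 2 + s₂ ^ 2)) / L := by gcongr
    _ = _ := by simp only [chordEnergy, hend, hD]; field_simp; ring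

lemma sum_range_two_mul (f : ℕ → ℝ) (n : ℕ) :
    ∑ k ∈ Finset.range (2 * n), f k = ∑ k ∈ Finset.range n, (f (2 * k) + f (2 * k + 1)) := by
  induction n with
  | zero => simp
  | succ n ih => rw [mul_add_one, Finset.sum_range_succ, Finset.sum_range_succ, ih,
      Finset.sum_range_succ]; ring

/-- Packing estimate for chord deviations over the bisection tree of an interval. -/
lemma sum_chordDev_sq_div_le (hA : ∀ x y, |A x - A y| ≤ M * |x - y|) (hM : 0 ≤ M)
    {a L : ℝ} (hL : 0 < L) (N : ℕ) :
    ∑ n ∈ Finset.range N, ∑ k ∈ Finset.range (2 ^ n),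
      chordDev A (a + L * k / 2 ^ n) (L / 2 ^ n) ^ 2 / (L / 2 ^ n) ≤ 11 * M ^ 2 * L := by
  set F : ℕ → ℝ := fun n => ∑ k ∈ Finset.range (2 ^ n),
    chordDev A (a + L * k / 2 ^ n) (L / 2 ^ n) ^ 2 / (L / 2 ^ n)
  set H : ℕ → ℝ := fun n => ∑ k ∈ Finset.range (2 ^ n),
    chordEnergy A (a + L * k / 2 ^ n) (L / 2 ^ n)
  have hpos : ∀ n : ℕ, 0 < L / 2 ^ n := fun n => by positivity
  have hstep : ∀ n, F n ≤ H (n + 1) - H n + 2 / 3 * F (n + 1) := by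
    intro n
    simp only [F, H]
    rw [pow_succ' 2 n, sum_range_two_mul, sum_range_two_mul, ← Finset.sum_sub_distrib,
      Finset.mul_sum, ← Finset.sum_add_distrib]
    refine Finset.sum_le_sum fun k _ => ?_
    have e1 : L / 2 ^ (n + 1) = L / 2 ^ n / 2 := by rw [pow_succ]; field_simp
    have e2 : a + L * ((2 * k : ℕ) : ℝ) / 2 ^ (n + 1) = a + L * k / 2 ^ n := by
      push_cast; rw [pow_succ]; field_simp
    have e3 : a + L * ((2 * k + 1 : ℕ) : ℝ) / 2 ^ (n + 1) =
        a + L * k / 2 ^ n + L / 2 ^ n / 2 := by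
      push_cast; rw [pow_succ]; field_simp; ring
    rw [e1, e2, e3]
    exact chordDev_sq_div_le_bisect hA hM (hpos n)
  have hH : H N ≤ M ^ 2 * L := by
    calc H N ≤ ∑ k ∈ Finset.range (2 ^ N), M ^ 2 * (L / 2 ^ N) :=
          Finset.sum_le_sum fun k _ => chordEnergy_le hA (hpos N)
      _ = M ^ 2 * L := by simp; field_simp
  have hF : F N ≤ 4 * M ^ 2 * L := by
    calc F N ≤ ∑ k ∈ Finset.range (2 ^ N), 4 * M ^ 2 * (L / 2 ^ N) := by
          refine Finset.sum_le_sum fun k _ => ?_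
          rw [div_le_iff₀ (hpos N)]
          have h1 := chordDev_le hA hM (a := a + L * k / 2 ^ N) (hpos N)
          have h0 := chordDev_nonneg A (a + L * k / 2 ^ N) (L / 2 ^ N)
          calc _ ≤ (2 * M * (L / 2 ^ N)) ^ 2 := by gcongr
            _ = _ := by ring
      _ = 4 * M ^ 2 * L := by simp; field_simp
  have hH0 : 0 ≤ H 0 := Finset.sum_nonneg fun k _ => div_nonneg (sq_nonneg _) (hpos 0).le
  have hF0 : 0 ≤ F 0 := Finset.sum_nonneg fun k _ => div_nonneg (sq_nonneg _) (hpos 0).le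
  have hsum : ∑ n ∈ Finset.range N, F n ≤
      H N - H 0 + 2 / 3 * (∑ n ∈ Finset.range N, F n + F N - F 0) := by
    calc ∑ n ∈ Finset.range N, F n
        ≤ ∑ n ∈ Finset.range N, (H (n + 1) - H n + 2 / 3 * F (n + 1)) :=
          Finset.sum_le_sum fun n _ => hstep n
      _ = _ := by
        rw [Finset.sum_add_distrib, Finset.sum_range_sub, ← Finset.mul_sum,
          ← Finset.sum_range_succ F N, Finset.sum_range_succ' F N, add_sub_cancel_right]
  linarith

lemma jonesBeta_nonneg (n : ℕ) (A : ℝ → ℝ) (j m : ℤ) : 0 ≤ jonesBeta n A j m :=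
  Real.iInf_nonneg fun _ => div_nonneg
    (Real.iSup_nonneg fun _ => Real.iSup_nonneg fun _ => abs_nonneg _) (by positivity)

/-- The beta number is controlled by the chord deviation over any interval containing the
tripled dyadic interval. -/
lemma jonesBeta_le_chordDev (hA : ∀ x y, |A x - A y| ≤ M * |x - y|) (hM : 0 ≤ M)
    {j m : ℤ} {a L : ℝ} (hL : 0 < L) (h1 : a ≤ 2 ^ j * ((m : ℝ) - 1))
    (h2 : 2 ^ j * ((m : ℝ) + 2) ≤ a + L) :
    jonesBeta 1 A j m ≤ chordDev A a L / 2 ^ j := by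
  unfold jonesBeta
  refine (ciInf_le ⟨0, ?_⟩ (A a - (A (a + L) - A a) / L * a, (A (a + L) - A a) / L)).trans ?_
  · rintro _ ⟨ab, rfl⟩
    exact div_nonneg
      (Real.iSup_nonneg fun _ => Real.iSup_nonneg fun _ => abs_nonneg _) (by positivity)
  · gcongr
    refine Real.iSup_le (fun x => Real.iSup_le (fun hx => ?_) (chordDev_nonneg _ _ _))
      (chordDev_nonneg _ _ _)
    obtain ⟨hx1, hx2⟩ := hx
    push_cast at hx1 hx2
    refine le_trans (le_of_eq ?_) (abs_sub_chord_le_chordDev hA hM (a := a) (x := x) hL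
      ⟨by linarith, by linarith⟩)
    congr 1
    unfold chord
    ring

lemma jonesBeta_sq_mul_le (hA : ∀ x y, |A x - A y| ≤ M * |x - y|) (hM : 0 ≤ M)
    {j m : ℤ} {a L : ℝ} (hL : L = 16 * 2 ^ j) (h1 : a ≤ 2 ^ j * ((m : ℝ) - 1))
    (h2 : 2 ^ j * ((m : ℝ) + 2) ≤ a + L) :
    jonesBeta 1 A j m ^ 2 * 2 ^ j ≤ 16 * (chordDev A a L ^ 2 / L) := by
  have hj : (0 : ℝ) < 2 ^ j := by positivity
  have hb := jonesBeta_le_chordDev hA hM (hL ▸ by positivity) h1 h2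
  have h0 := jonesBeta_nonneg 1 A j m
  calc jonesBeta 1 A j m ^ 2 * 2 ^ j ≤ (chordDev A a L / 2 ^ j) ^ 2 * 2 ^ j := by gcongr
    _ = 16 * (chordDev A a L ^ 2 / (16 * 2 ^ j)) := by field_simp
    _ = _ := by rw [← hL]

/-- The one-third trick: every tripled dyadic subinterval of `[a, a + L)` of generation `n` lies
in an interval of generation `n` of one of two bisection trees with roots of length `16 * L`. -/
lemma jonesBeta_sq_mul_le_add (hA : ∀ x y, |A x - A y| ≤ M * |x - y|) (hM : 0 ≤ M)
    {j m : ℤ} {n i : ℕ} (hi : i < 2 ^ n) {a L : ℝ} (hL : L = 2 ^ n * 2 ^ j)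
    (hm : a + 2 ^ j * (i : ℝ) = 2 ^ j * m) :
    jonesBeta 1 A j m ^ 2 * 2 ^ j ≤
      16 * (chordDev A (a - 8 * L + 16 * L * ((i + 8 * 2 ^ n) / 16 : ℕ) / 2 ^ n)
          (16 * L / 2 ^ n) ^ 2 / (16 * L / 2 ^ n)) +
      16 * (chordDev A (a - 16 * L / 3 + 16 * L * ((i + 16 * 2 ^ n / 3) / 16 : ℕ) / 2 ^ n)
          (16 * L / 2 ^ n) ^ 2 / (16 * L / 2 ^ n)) := by
  have hj : (0 : ℝ) < 2 ^ j := by positivity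
  have hn : (0 : ℝ) < 2 ^ n := by positivity
  have hlen : 16 * L / 2 ^ n = 16 * 2 ^ j := by rw [hL]; field_simp
  have hlen0 : 0 ≤ 16 * L / 2 ^ n := by rw [hlen]; positivity
  have hcast : ((2 ^ n : ℕ) : ℝ) = 2 ^ n := by push_cast; rfl
  have hmod3 : 2 ^ n % 3 ≠ 0 := fun h => by
    have := Nat.prime_three.dvd_of_dvd_pow (Nat.dvd_of_mod_eq_zero h)
    omega
  have hpar : 2 ^ n = 1 ∨ 2 ∣ 2 ^ n := by
    rcases n with _ | n
    · simp
    · exact Or.inr (dvd_pow_self 2 (by simp))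
  generalize hw : 2 ^ n = w at *
  by_cases hc : 16 * ((i + 8 * w) / 16) + 1 ≤ i + 8 * w ∧
      i + 8 * w + 2 ≤ 16 * ((i + 8 * w) / 16) + 16
  · refine le_add_of_le_of_nonneg
      (jonesBeta_sq_mul_le hA hM hlen ?_ ?_) (by positivity)
    all_goals
      generalize (i + 8 * w) / 16 = k at *
      obtain ⟨c1, c2⟩ := hc
      have c1' : (16 * k + 1 : ℝ) ≤ i + 8 * w := by exact_mod_cast c1
      have c2' : (i + 8 * w + 2 : ℝ) ≤ 16 * k + 16 := by exact_mod_cast c2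
      have e : 16 * L * (k : ℝ) / 2 ^ n = 2 ^ j * (16 * k) := by rw [hL]; field_simp
      rw [e]
      try rw [hlen]
      rw [hL, ← hcast]
      nlinarith
  · have hi16 : i % 16 = 0 ∨ i % 16 = 15 := by
      rcases hpar with rfl | ⟨v, rfl⟩ <;> omega
    have ht16 : 16 * w / 3 % 16 = 5 ∨ 16 * w / 3 % 16 = 10 := by
      obtain h | h : w % 3 = 1 ∨ w % 3 = 2 := by omega
      · exact Or.inl (by rw [show 16 * w / 3 = 16 * (w / 3) + 5 by omega]; omega)
      · exact Or.inr (by rw [show 16 * w / 3 = 16 * (w / 3) + 10 by omega]; omega)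
    have hc' : 16 * ((i + 16 * w / 3) / 16) + 1 ≤ i + 16 * w / 3 ∧
        i + 16 * w / 3 + 3 ≤ 16 * ((i + 16 * w / 3) / 16) + 16 := by
      generalize 16 * w / 3 = t at ht16 ⊢
      omega
    have ht1 : 3 * (16 * w / 3) ≤ 16 * w := by omega
    have ht2 : 16 * w ≤ 3 * (16 * w / 3) + 3 := by omega
    refine le_add_of_nonneg_of_le (by positivity)
      (jonesBeta_sq_mul_le hA hM hlen ?_ ?_)
    all_goals
      generalize 16 * w / 3 = t at *
      generalize (i + t) / 16 = k at *
      obtain ⟨c1, c2⟩ := hc'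
      have c1' : (16 * k + 1 : ℝ) ≤ i + t := by exact_mod_cast c1
      have c2' : (i + t + 3 : ℝ) ≤ 16 * k + 16 := by exact_mod_cast c2
      have ht1' : (3 * t : ℝ) ≤ 16 * w := by exact_mod_cast ht1
      have ht2' : (16 * w : ℝ) ≤ 3 * t + 3 := by exact_mod_cast ht2
      have e : 16 * L * (k : ℝ) / 2 ^ n = 2 ^ j * (16 * k) := by rw [hL]; field_simp
      rw [e]
      try rw [hlen]
      rw [hL, ← hcast]
      nlinarith

lemma sum_range_comp_div_le {f : ℕ → ℝ} (hf : ∀ k, 0 ≤ f k) {d : ℕ} (hd : 0 < d)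
    {N K s : ℕ} (hs : N + s ≤ d * K) :
    ∑ i ∈ Finset.range N, f ((i + s) / d) ≤ d * ∑ k ∈ Finset.range K, f k := by
  have hblock : ∑ i ∈ Finset.range (d * K), f (i / d) = d * ∑ k ∈ Finset.range K, f k := by
    induction K generalizing N s with
    | zero => simp
    | succ K ih =>
      rw [mul_add_one, Finset.sum_range_add, ih (N := 0) (s := 0) (by simp),
        Finset.sum_range_succ, mul_add]
      congr 1
      rw [Finset.sum_congr rfl (g := fun _ => f K)]
      · simp
      · intro x hx
        rw [Nat.mul_add_div hd, Nat.div_eq_of_lt (Finset.mem_range.1 hx), add_zero]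
  rw [← hblock]
  calc ∑ i ∈ Finset.range N, f ((i + s) / d)
      ≤ ∑ i ∈ Finset.range s, f (i / d) + ∑ i ∈ Finset.range N, f ((s + i) / d) := by
        simp only [add_comm s]
        exact le_add_of_nonneg_left (Finset.sum_nonneg fun _ _ => hf _)
    _ = ∑ i ∈ Finset.range (s + N), f (i / d) :=
        (Finset.sum_range_add (fun i => f (i / d)) s N).symm
    _ ≤ _ := Finset.sum_le_sum_of_subset_of_nonneg
        (Finset.range_mono (by omega)) fun _ _ _ => hf _

/-- The packing condition, summed over the first `N` generations. -/
lemma sum_jonesBeta_sq_mul_le (hA : ∀ x y, |A x - A y| ≤ M * |x - y|) (hM : 0 ≤ M)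
    (j m : ℤ) (N : ℕ) :
    ∑ n ∈ Finset.range N, ∑ i ∈ Finset.range (2 ^ n),
      jonesBeta 1 A (j - n) (m * 2 ^ n + i) ^ 2 * (2 : ℝ) ^ (j - n) ≤
      90112 * M ^ 2 * (2 : ℝ) ^ j := by
  set L : ℝ := 2 ^ j with hLdef
  have hL : 0 < L := by positivity
  set a : ℝ := L * m
  set Φ : ℝ → ℕ → ℕ → ℝ := fun b n k =>
    chordDev A (b + 16 * L * k / 2 ^ n) (16 * L / 2 ^ n) ^ 2 / (16 * L / 2 ^ n)
  have hΦ : ∀ b n k, 0 ≤ Φ b n k := fun b n k => by positivity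
  have hlevel : ∀ n ∈ Finset.range N, ∑ i ∈ Finset.range (2 ^ n),
      jonesBeta 1 A (j - n) (m * 2 ^ n + i) ^ 2 * (2 : ℝ) ^ (j - n) ≤
      256 * ∑ k ∈ Finset.range (2 ^ n), Φ (a - 8 * L) n k +
      256 * ∑ k ∈ Finset.range (2 ^ n), Φ (a - 16 * L / 3) n k := by
    intro n _
    have hLn : L = 2 ^ n * (2 : ℝ) ^ (j - n) := by
      rw [hLdef, zpow_sub₀ two_ne_zero, zpow_natCast]; field_simp
    have hw : 1 ≤ 2 ^ n := Nat.one_le_two_pow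
    calc _ ≤ ∑ i ∈ Finset.range (2 ^ n), (16 * Φ (a - 8 * L) n ((i + 8 * 2 ^ n) / 16) +
          16 * Φ (a - 16 * L / 3) n ((i + 16 * 2 ^ n / 3) / 16)) := by
          refine Finset.sum_le_sum fun i hi => ?_
          refine jonesBeta_sq_mul_le_add hA hM (Finset.mem_range.1 hi) hLn ?_
          simp only [a]
          rw [hLn]; push_cast; ring
      _ ≤ _ := by
          rw [Finset.sum_add_distrib, ← Finset.mul_sum, ← Finset.mul_sum]
          have h1 := sum_range_comp_div_le (hΦ (a - 8 * L) n) (d := 16) (N := 2 ^ n)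
            (K := 2 ^ n) (s := 8 * 2 ^ n) (by norm_num) (by omega)
          have h2 := sum_range_comp_div_le (hΦ (a - 16 * L / 3) n) (d := 16) (N := 2 ^ n)
            (K := 2 ^ n) (s := 16 * 2 ^ n / 3) (by norm_num) (by omega)
          push_cast at h1 h2
          linarith
  refine (Finset.sum_le_sum hlevel).trans ?_
  rw [Finset.sum_add_distrib, ← Finset.mul_sum, ← Finset.mul_sum]
  have h1 := sum_chordDev_sq_div_le hA hM (a := a - 8 * L) (L := 16 * L) (by positivity) N
  have h2 := sum_chordDev_sq_div_le hA hM (a := a - 16 * L / 3) (L := 16 * L) (by positivity) N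
  simp only [Φ]
  linarith

end Lipschitz

/-- A dyadic subinterval is determined by its generation and its position. -/
lemma exists_of_dyadicI_subset {j m jJ mJ : ℤ} (h : dyadicI j m ⊆ dyadicI jJ mJ) :
    ∃ n i : ℕ, i < 2 ^ n ∧ j = jJ - n ∧ m = mJ * 2 ^ n + i := by
  have hj : (0 : ℝ) < 2 ^ j := by positivity
  obtain ⟨h1, h2⟩ := (Set.Ico_subset_Ico_iff (by nlinarith)).1 h
  have hle : j ≤ jJ := by
    rw [← zpow_le_zpow_iff_right₀ (one_lt_two (α := ℝ))]
    linarith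
  obtain ⟨n, hn⟩ := Int.eq_ofNat_of_zero_le (sub_nonneg.2 hle)
  obtain rfl : jJ = j + n := by omega
  rw [zpow_add₀ two_ne_zero, zpow_natCast, mul_assoc] at h1 h2
  have h1' := le_of_mul_le_mul_left h1 hj
  have h2' := le_of_mul_le_mul_left h2 hj
  have k1 : 2 ^ n * mJ ≤ m := by exact_mod_cast h1'
  have k2 : m + 1 ≤ 2 ^ n * (mJ + 1) := by exact_mod_cast h2'
  obtain ⟨i, hi⟩ := Int.eq_ofNat_of_zero_le (sub_nonneg.2 k1)
  refine ⟨n, i, ?_, by omega, by linarith⟩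
  have : (i : ℤ) < 2 ^ n := by linarith
  exact_mod_cast this

/-- Carleson packing condition for Jones' beta numbers of a Lipschitz function. -/
theorem stmt13 : ∃ C : ℝ, 0 < C ∧ ∀ M : ℝ, 0 ≤ M → ∀ A : ℝ → ℝ,
    LipschitzWith (Real.toNNReal M) A → ∀ jJ mJ : ℤ,
    ∑' I : {q : ℤ × ℤ // dyadicI q.1 q.2 ⊆ dyadicI jJ mJ},
        ENNReal.ofReal (jonesBeta 1 A I.1.1 I.1.2 ^ 2 * (2 : ℝ) ^ I.1.1) ≤
      ENNReal.ofReal (C * M ^ 2 * (2 : ℝ) ^ jJ) := by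
  refine ⟨90112, by norm_num, fun M hM A hLip jJ mJ => ?_⟩
  have hA : ∀ x y, |A x - A y| ≤ M * |x - y| := fun x y => by
    have := hLip.dist_le_mul x y
    rwa [Real.coe_toNNReal M hM, Real.dist_eq, Real.dist_eq] at this
  set t : ℕ → ℕ → ℝ := fun n i =>
    jonesBeta 1 A (jJ - n) (mJ * 2 ^ n + i) ^ 2 * (2 : ℝ) ^ (jJ - n)
  have ht : ∀ n i, 0 ≤ t n i := fun n i => by positivity
  set g : ℕ × ℕ → ENNReal := fun p =>
    if p.2 < 2 ^ p.1 then ENNReal.ofReal (t p.1 p.2) else 0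
  choose n i hi hj hm using fun I : {q : ℤ × ℤ // dyadicI q.1 q.2 ⊆ dyadicI jJ mJ} =>
    exists_of_dyadicI_subset I.2
  have hinj : Function.Injective fun I => (n I, i I) := by
    intro I I' h
    obtain ⟨hn, hi'⟩ := Prod.mk.inj h
    refine Subtype.ext (Prod.ext ?_ ?_)
    · rw [hj I, hj I', hn]
    · rw [hm I, hm I', hn, hi']
  calc _ = ∑' I, g (n I, i I) := by
        refine tsum_congr fun I => ?_
        simp only [g, t, if_pos (hi I)]
        rw [← hj I, ← hm I]
    _ ≤ ∑' p, g p := ENNReal.tsum_comp_le_tsum_of_injective hinj g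
    _ = ∑' n, ∑' i, g (n, i) := ENNReal.tsum_prod (f := fun n i => g (n, i))
    _ = ∑' n, ENNReal.ofReal (∑ i ∈ Finset.range (2 ^ n), t n i) := by
        refine tsum_congr fun n => ?_
        rw [ENNReal.ofReal_sum_of_nonneg fun _ _ => ht _ _,
          tsum_eq_sum (s := Finset.range (2 ^ n))]
        · exact Finset.sum_congr rfl fun i hi => if_pos (Finset.mem_range.1 hi)
        · intro i hi
          exact if_neg fun h => hi (Finset.mem_range.2 h)
    _ ≤ _ := by
        rw [ENNReal.tsum_eq_iSup_nat]
        refine iSup_le fun N => ?_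
        rw [← ENNReal.ofReal_sum_of_nonneg fun _ _ => Finset.sum_nonneg fun _ _ => ht _ _]
        exact ENNReal.ofReal_le_ofReal (sum_jonesBeta_sq_mul_le hA hM jJ mJ N)
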